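/- arXiv:2105.11653 — 6 statements merged into one kernel-verified Lean document; each statement's English description precedes it below -/
import Mathlib

section
/- Fix an integer n > 0 and a real α ∈ (0,1). Let (X_k)_{k≥0} be integer-valued random variables on a probability space with X_0 = n such that almost surely: if X_k = 1 then X_{k+1} = 1, and if X_k > 1 then X_{k+1} = X_k − Z_k where Z_k is an integer-valued random variable with 1 ≤ Z_k ≤ X_k − 1 and E[Z_k | X_0, …, X_k] ≥ α X_k almost surely. Let τ = min{k : X_k = 1}. Then E[τ] ≤ log n / log(1/(1−α)). -/
/-!
The potential `log X_k` starts at `log n`, never becomes negative, and drops in expectation by at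
least `c = log (1 / (1 - α))` in every round in which the chain has not yet reached `1`. Hence the
expected number of such rounds, which is `E[τ]`, is at most `log n / c`.

Instead of the conditional Jensen inequality, the drop (`drift`) uses the tangent line of `log` at
`(1 - α) X_k`, that is `log X_{k+1} ≤ log X_k - c + X_{k+1} / ((1 - α) X_k) - 1`, which reduces the
matter to the lower bound `integral_weighted_step` on the mean relative step. The chain lies in
`[1, n]` and is absorbed after at most `n` rounds (`path_bounds`), so all the functions involved are
bounded and all the sums are finite.
-/

open MeasureTheory

/-- Deterministic behaviour of a single path: it stays at or above `1` and has reached `1` by time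
`n`. -/
lemma path_bounds (n : ℕ) (hn : 0 < n) (x : ℕ → ℤ) (h0 : x 0 = n)
    (habs : ∀ k, x k = 1 → x (k + 1) = 1)
    (hstep : ∀ k, 1 < x k → 1 ≤ x k - x (k + 1) ∧ x k - x (k + 1) ≤ x k - 1) (k : ℕ) :
    1 ≤ x k ∧ x k ≤ max 1 ((n : ℤ) - k) := by
  induction k with
  | zero => simp [h0]; omega
  | succ k ih =>
    obtain ⟨h1, h2⟩ := ih
    rcases h1.eq_or_lt with h | h
    · rw [habs k h.symm]; simp
    · have := hstep k h
      push_cast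
      omega

/-- The hitting time of `1` is at most the number of times before `n` at which the path exceeds `1`.
Absorption at `1` plays no role for this direction. -/
lemma sInf_le_sum_indicator (n : ℕ) (x : ℕ → ℤ) (h1 : ∀ k, 1 ≤ x k) (hn : x n = 1) :
    ((sInf {k | x k = 1} : ℕ) : ℝ) ≤ ∑ k ∈ Finset.range n, if 1 < x k then (1 : ℝ) else 0 := by
  have hle : sInf {k | x k = 1} ≤ n := Nat.sInf_le hn
  calc ((sInf {k | x k = 1} : ℕ) : ℝ)
      = ∑ k ∈ Finset.range (sInf {k | x k = 1}), (1 : ℝ) := by simp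
    _ = ∑ k ∈ Finset.range (sInf {k | x k = 1}), if 1 < x k then (1 : ℝ) else 0 := by
        refine Finset.sum_congr rfl fun k hk => ?_
        have hne : x k ≠ 1 := Nat.notMem_of_lt_sInf (Finset.mem_range.1 hk)
        rw [if_pos (lt_of_le_of_ne (h1 k) hne.symm)]
    _ ≤ _ := by
        refine Finset.sum_le_sum_of_subset_of_nonneg (Finset.range_mono hle) ?_
        intro k _ _
        split_ifs <;> norm_num

/-- The tangent line of `log` at `(1 - α) x`, written in terms of the relative step
`(x - y) / x`. -/
lemma log_le_tangent {α x y : ℝ} (hα1 : α < 1) (hx : 0 < x) (hy : 0 < y) :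
    Real.log y ≤ Real.log x - (Real.log (1 / (1 - α)) + 1)
      + (1 / (1 - α)) * (1 - x⁻¹ * (x - y)) := by
  have ha : 0 < 1 - α := by linarith
  have h := Real.log_le_sub_one_of_pos (show 0 < y / ((1 - α) * x) by positivity)
  rw [Real.log_div hy.ne' (by positivity), Real.log_mul ha.ne' hx.ne'] at h
  have e : (1 / (1 - α)) * (1 - x⁻¹ * (x - y)) = y / ((1 - α) * x) := by
    field_simp
    ring
  rw [e, one_div, Real.log_inv]
  linarith

/-- A lower bound `α Y ≤ E[D | m]` on the event `Y > 1` passes to the mean of the ratio `D / Y` on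
that event, as the weight `1_{Y > 1} / Y` is bounded and `m`-measurable and can be pulled out. -/
lemma integral_weighted_step {Ω : Type*} {m m0 : MeasurableSpace Ω} (hm : m ≤ m0)
    (μ : Measure Ω) [IsProbabilityMeasure μ] (α : ℝ) (Y : Ω → ℤ) (hY : Measurable[m] Y)
    (D : Ω → ℝ) (hD : Integrable D μ)
    (hcond : ∀ᵐ ω ∂μ, 1 < Y ω → α * (Y ω : ℝ) ≤ (μ[D | m]) ω) :
    Integrable (fun ω => (if 1 < Y ω then (Y ω : ℝ)⁻¹ else 0) * D ω) μ ∧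
    α * ∫ ω, (if 1 < Y ω then (1 : ℝ) else 0) ∂μ ≤
      ∫ ω, (if 1 < Y ω then (Y ω : ℝ)⁻¹ else 0) * D ω ∂μ := by
  have hW : StronglyMeasurable[m] (fun ω => if 1 < Y ω then (Y ω : ℝ)⁻¹ else 0) :=
    ((measurable_from_top (f := fun z : ℤ => if 1 < z then (z : ℝ)⁻¹ else 0)).comp
      hY).stronglyMeasurable
  have hWb : ∀ ω, ‖(if 1 < Y ω then (Y ω : ℝ)⁻¹ else 0)‖ ≤ 1 := by
    intro ω
    split_ifs with h
    · have h' : (1 : ℝ) < Y ω := by exact_mod_cast h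
      rw [Real.norm_eq_abs, abs_of_pos (by positivity)]
      exact inv_le_one_of_one_le₀ h'.le
    · simp
  have hWD : Integrable (fun ω => (if 1 < Y ω then (Y ω : ℝ)⁻¹ else 0) * D ω) μ :=
    hD.bdd_mul (hW.mono hm).aestronglyMeasurable (Filter.Eventually.of_forall hWb)
  refine ⟨hWD, ?_⟩
  have hpull := condExp_mul_of_stronglyMeasurable_left hW hWD hD
  rw [← integral_condExp hm (f := fun ω => (if 1 < Y ω then (Y ω : ℝ)⁻¹ else 0) * D ω),
    ← integral_const_mul]
  refine integral_mono_ae ?_ integrable_condExp ?_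
  · refine Integrable.of_bound (C := |α|) ?_ (Filter.Eventually.of_forall fun ω => ?_)
    · exact ((measurable_from_top (f := fun z : ℤ => α * if 1 < z then (1 : ℝ) else 0)).comp
        (hY.mono hm le_rfl)).aestronglyMeasurable
    · split_ifs <;> simp
  · filter_upwards [hpull, hcond] with ω h1 h2
    refine le_of_le_of_eq ?_ h1.symm
    simp only [Pi.mul_apply]
    split_ifs with h
    · have h' : (1 : ℝ) < Y ω := by exact_mod_cast h
      have h0 : (0 : ℝ) < Y ω := by linarith
      calc α * 1 = (Y ω : ℝ)⁻¹ * (α * Y ω) := by field_simp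
        _ ≤ _ := mul_le_mul_of_nonneg_left (h2 h) (by positivity)
    · simp

/-- One round, from `Y` to `Y'`, lowers the expected logarithm by at least `log (1 / (1 - α))`
times the probability that the round really takes place. -/
lemma drift {Ω : Type*} {m m0 : MeasurableSpace Ω} (hm : m ≤ m0)
    (μ : Measure Ω) [IsProbabilityMeasure μ] (n : ℕ) (α : ℝ) (hα1 : α < 1)
    (Y Y' : Ω → ℤ) (hY : Measurable[m] Y) (hY' : Measurable Y')
    (hb : ∀ᵐ ω ∂μ, 1 ≤ Y ω ∧ Y ω ≤ n) (hb' : ∀ᵐ ω ∂μ, 1 ≤ Y' ω ∧ Y' ω ≤ n)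
    (habs : ∀ᵐ ω ∂μ, Y ω = 1 → Y' ω = 1)
    (hcond : ∀ᵐ ω ∂μ, 1 < Y ω →
      α * (Y ω : ℝ) ≤ (μ[fun ω' => ((Y ω' - Y' ω' : ℤ) : ℝ) | m]) ω) :
    ∫ ω, Real.log (Y' ω) ∂μ + Real.log (1 / (1 - α)) *
      ∫ ω, (if 1 < Y ω then (1 : ℝ) else 0) ∂μ ≤ ∫ ω, Real.log (Y ω) ∂μ := by
  have hYm : Measurable Y := hY.mono hm le_rfl
  have hlog : ∀ Z : Ω → ℤ, Measurable Z → (∀ᵐ ω ∂μ, 1 ≤ Z ω ∧ Z ω ≤ n) →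
      Integrable (fun ω => Real.log (Z ω)) μ := by
    intro Z hZ hbZ
    refine Integrable.of_bound (C := Real.log n)
      ((measurable_from_top (f := fun z : ℤ => Real.log z)).comp hZ).aestronglyMeasurable ?_
    filter_upwards [hbZ] with ω h
    have h1 : (1 : ℝ) ≤ Z ω := by exact_mod_cast h.1
    have h2 : (Z ω : ℝ) ≤ n := by exact_mod_cast h.2
    rw [Real.norm_eq_abs, abs_of_nonneg (Real.log_nonneg h1)]
    exact Real.log_le_log (by linarith) h2
  have hD : Integrable (fun ω => ((Y ω - Y' ω : ℤ) : ℝ)) μ := by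
    refine Integrable.of_bound (C := (n : ℝ))
      ((measurable_from_top (f := fun z : ℤ => (z : ℝ))).comp
        (hYm.sub hY')).aestronglyMeasurable ?_
    filter_upwards [hb, hb'] with ω h h'
    rw [Real.norm_eq_abs, ← Int.cast_abs]
    have : |Y ω - Y' ω| ≤ n := abs_le.2 ⟨by omega, by omega⟩
    exact_mod_cast this
  have hB : Integrable (fun ω => if 1 < Y ω then (1 : ℝ) else 0) μ := by
    refine Integrable.of_bound (C := 1)
      ((measurable_from_top (f := fun z : ℤ => if 1 < z then (1 : ℝ) else 0)).comp
        hYm).aestronglyMeasurable (Filter.Eventually.of_forall fun ω => ?_)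
    split_ifs <;> simp
  obtain ⟨hWD, hmean⟩ := integral_weighted_step hm μ α Y hY _ hD hcond
  have hL := hlog Y hYm hb
  have hL' := hlog Y' hY' hb'
  have hpt : ∀ᵐ ω ∂μ, Real.log (Y' ω) ≤ (Real.log (Y ω)
      - (Real.log (1 / (1 - α)) + 1) * (if 1 < Y ω then (1 : ℝ) else 0))
      + (1 / (1 - α)) * ((if 1 < Y ω then (1 : ℝ) else 0)
        - (if 1 < Y ω then (Y ω : ℝ)⁻¹ else 0) * ((Y ω - Y' ω : ℤ) : ℝ)) := by
    filter_upwards [hb, hb', habs] with ω h h' ha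
    split_ifs with h1
    · have hy : (0 : ℝ) < Y ω := by exact_mod_cast (by omega : 0 < Y ω)
      have hy' : (0 : ℝ) < Y' ω := by exact_mod_cast (by omega : 0 < Y' ω)
      have := log_le_tangent hα1 hy hy'
      push_cast
      linarith
    · have e : Y ω = 1 := by omega
      simp [e, ha e]
  have hint := integral_mono_ae hL'
    ((hL.sub (hB.const_mul _)).add ((hB.sub hWD).const_mul _)) hpt
  rw [integral_add' (hL.sub (hB.const_mul _)) ((hB.sub hWD).const_mul _),
    integral_sub' hL (hB.const_mul _), integral_const_mul, integral_const_mul,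
    integral_sub' hB hWD] at hint
  have ha : 0 < 1 - α := by linarith
  have hscale := mul_le_mul_of_nonneg_left hmean (show 0 ≤ 1 / (1 - α) by positivity)
  have hcancel : ∀ p : ℝ, (1 / (1 - α)) * p - (1 / (1 - α)) * (α * p) = p := by
    intro p
    field_simp
  have := hcancel (∫ ω, (if 1 < Y ω then (1 : ℝ) else 0) ∂μ)
  linarith

theorem rac_expected_number_of_rounds {Ω : Type*} [m0 : MeasurableSpace Ω]
    (μ : Measure Ω) [IsProbabilityMeasure μ]
    (n : ℕ) (hn : 0 < n) (α : ℝ) (hα : α ∈ Set.Ioo (0 : ℝ) 1)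
    (X : ℕ → Ω → ℤ) (hXmeas : ∀ k, Measurable (X k))
    (𝓕 : ℕ → MeasurableSpace Ω)
    (h𝓕 : ∀ k, 𝓕 k = ⨆ i ∈ Finset.range (k + 1), MeasurableSpace.comap (X i) ⊤)
    (hX0 : ∀ ω, X 0 ω = (n : ℤ))
    (habsorb : ∀ᵐ ω ∂μ, ∀ k, X k ω = 1 → X (k + 1) ω = 1)
    (hstep : ∀ᵐ ω ∂μ, ∀ k, 1 < X k ω →
      1 ≤ X k ω - X (k + 1) ω ∧ X k ω - X (k + 1) ω ≤ X k ω - 1)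
    (hcond : ∀ k, ∀ᵐ ω ∂μ, 1 < X k ω →
      α * (X k ω : ℝ) ≤ (μ[fun ω' => ((X k ω' - X (k + 1) ω' : ℤ) : ℝ) | 𝓕 k]) ω)
    (τ : Ω → ℕ) (hτ : ∀ ω, τ ω = sInf {k | X k ω = 1}) :
    ∫ ω, (τ ω : ℝ) ∂μ ≤ Real.log n / Real.log (1 / (1 - α)) := by
  obtain ⟨hα0, hα1⟩ := hα
  have hc : 0 < Real.log (1 / (1 - α)) :=
    Real.log_pos ((one_lt_div (by linarith)).2 (by linarith))
  have hm : ∀ k, 𝓕 k ≤ m0 := fun k => by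
    rw [h𝓕]
    exact iSup₂_le fun i _ => (hXmeas i).comap_le
  have hadapt : ∀ k, Measurable[𝓕 k] (X k) := fun k => by
    rw [measurable_iff_comap_le, h𝓕]
    exact le_iSup₂_of_le k (Finset.self_mem_range_succ k) le_rfl
  have hpath : ∀ᵐ ω ∂μ, ∀ k, 1 ≤ X k ω ∧ X k ω ≤ max 1 ((n : ℤ) - k) := by
    filter_upwards [habsorb, hstep] with ω h1 h2
    exact path_bounds n hn (fun k => X k ω) (hX0 ω) h1 h2
  have hb : ∀ k, ∀ᵐ ω ∂μ, 1 ≤ X k ω ∧ X k ω ≤ n := fun k => by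
    filter_upwards [hpath] with ω h
    have := h k
    omega
  have hdrift := fun k => drift (hm k) μ n α hα1 (X k) (X (k + 1)) (hadapt k) (hXmeas _)
    (hb k) (hb (k + 1)) (habsorb.mono fun ω h => h k) (hcond k)
  have hsum : ∀ N : ℕ, ∫ ω, Real.log (X N ω) ∂μ + Real.log (1 / (1 - α)) *
      ∑ k ∈ Finset.range N, ∫ ω, (if 1 < X k ω then (1 : ℝ) else 0) ∂μ ≤ Real.log n := by
    intro N
    induction N with
    | zero => simp [hX0]
    | succ N ih =>
      rw [Finset.sum_range_succ, mul_add]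
      linarith [hdrift N]
  have hB : ∀ k, Integrable (fun ω => if 1 < X k ω then (1 : ℝ) else 0) μ := fun k => by
    refine Integrable.of_bound (C := 1)
      ((measurable_from_top (f := fun z : ℤ => if 1 < z then (1 : ℝ) else 0)).comp
        (hXmeas k)).aestronglyMeasurable (Filter.Eventually.of_forall fun ω => ?_)
    split_ifs <;> simp
  have hτle : ∫ ω, (τ ω : ℝ) ∂μ ≤
      ∑ k ∈ Finset.range n, ∫ ω, (if 1 < X k ω then (1 : ℝ) else 0) ∂μ := by
    rw [← integral_finsetSum _ fun k _ => hB k]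
    -- Only the dominating sum has to be integrable, so measurability of `τ` is not needed.
    refine integral_mono_of_nonneg (Filter.Eventually.of_forall fun ω => Nat.cast_nonneg _)
      (integrable_finsetSum _ fun k _ => hB k) ?_
    filter_upwards [hpath] with ω h
    rw [hτ]
    refine sInf_le_sum_indicator n (fun k => X k ω) (fun k => (h k).1) ?_
    have := h n
    simp only [sub_self] at this
    omega
  have hnonneg : 0 ≤ ∫ ω, Real.log (X n ω) ∂μ := by
    refine integral_nonneg_of_ae ?_
    filter_upwards [hb n] with ω h
    exact Real.log_nonneg (by exact_mod_cast h.1)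
  rw [le_div_iff₀ hc]
  nlinarith [hsum n, mul_le_mul_of_nonneg_left hτle hc.le]
end

section
/- Fix an integer n > 0 and reals α ∈ (0,1), β > 0. Let (X_k)_{k≥0} be integer-valued random variables on a probability space with X_0 = n such that almost surely: if X_k = 1 then X_{k+1} = 1, and if X_k > 1 then X_{k+1} = X_k − Z_k where Z_k is an integer-valued random variable with 1 ≤ Z_k ≤ X_k − 1 and E[Z_k | X_0, …, X_k] ≥ α X_k almost surely. Let τ = min{k : X_k = 1}. Then P[τ > (1+β)·log n / log(1/(1−α))] ≤ n^{1−β}. -/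
/-!
Almost surely `1 ≤ X k ≤ n`, so everything is integrable, and on the `𝓕 k`-measurable event
`{X k > 1}` the drift condition integrates to `E[X (k+1); X k > 1] ≤ (1 - α) E[X k; X k > 1]`
(`setIntegral_step`). Since `1` is absorbing, `{X (k+1) > 1} ⊆ {X k > 1}` almost surely, whence
`E[X k; X k > 1] ≤ (1 - α) ^ k * n` and, as in Markov's inequality,
`P(X k > 1) ≤ (1 - α) ^ k * n` (`measureReal_gt_one_le`).

Write `T = (1 + β) log n / log (1 / (1 - α))`, so that `(1 - α) ^ T = n ^ (-(1 + β))`. The event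
`τ > T` forces `X k ≠ 1` for `k = ⌊T⌋`, and rounding `T` down costs at most a factor `1 / (1 - α)`.
That factor is at most `n` when `n ≥ 2`: the first step from `n` decreases by at least `α n` in mean,
yet cannot go below `1`, so `1 ≤ (1 - α) n`. This gives `n * n ^ (-(1 + β)) * n = n ^ (1 - β)`.
When `n = 1` both `T` and `τ` vanish.
-/

open MeasureTheory

/-- The drift condition, integrated over the event that the process has not yet been absorbed. -/
lemma setIntegral_step {Ω : Type*} {m m0 : MeasurableSpace Ω} {μ : Measure Ω}
    [IsProbabilityMeasure μ] (hm : m ≤ m0) {α : ℝ} {Y Z : Ω → ℤ}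
    (hY : Measurable[m] Y) (hYi : Integrable (fun ω => (Y ω : ℝ)) μ)
    (hZi : Integrable (fun ω => (Z ω : ℝ)) μ)
    (hcond : ∀ᵐ ω ∂μ, 1 < Y ω →
      α * (Y ω : ℝ) ≤ (μ[fun ω' => ((Y ω' - Z ω' : ℤ) : ℝ) | m]) ω) :
    ∫ ω in {ω | 1 < Y ω}, (Z ω : ℝ) ∂μ ≤ (1 - α) * ∫ ω in {ω | 1 < Y ω}, (Y ω : ℝ) ∂μ := by
  have hS : MeasurableSet[m] {ω | 1 < Y ω} := hY (measurableSet_Ioi (a := (1 : ℤ)))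
  have hdi : Integrable (fun ω => ((Y ω - Z ω : ℤ) : ℝ)) μ := by
    simp only [Int.cast_sub]
    exact hYi.sub hZi
  have h1 : ∫ ω in {ω | 1 < Y ω}, α * (Y ω : ℝ) ∂μ ≤
      ∫ ω in {ω | 1 < Y ω}, (μ[fun ω' => ((Y ω' - Z ω' : ℤ) : ℝ) | m]) ω ∂μ :=
    setIntegral_mono_on_ae (hYi.const_mul α).integrableOn integrable_condExp.integrableOn
      (hm _ hS) hcond
  rw [setIntegral_condExp hm hdi hS, integral_const_mul] at h1
  have h2 : ∫ ω in {ω | 1 < Y ω}, ((Y ω - Z ω : ℤ) : ℝ) ∂μ =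
      ∫ ω in {ω | 1 < Y ω}, (Y ω : ℝ) ∂μ - ∫ ω in {ω | 1 < Y ω}, (Z ω : ℝ) ∂μ := by
    simp only [Int.cast_sub]
    exact integral_sub hYi.integrableOn hZi.integrableOn
  linarith

/-- The truncated means decay geometrically, and `X k ≥ 1` on the event turns this into a bound on
the probability that the process has not been absorbed by time `k`. -/
lemma measureReal_gt_one_le {Ω : Type*} [MeasurableSpace Ω] {μ : Measure Ω}
    [IsProbabilityMeasure μ] {n : ℕ} {α : ℝ} (hα : α < 1) {X : ℕ → Ω → ℤ}
    (hXmeas : ∀ k, Measurable (X k)) (hint : ∀ k, Integrable (fun ω => (X k ω : ℝ)) μ)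
    (hX0 : ∀ ω, X 0 ω = (n : ℤ))
    (hpos : ∀ k, ∀ᵐ ω ∂μ, 1 ≤ X k ω)
    (habsorb : ∀ k, ∀ᵐ ω ∂μ, X k ω = 1 → X (k + 1) ω = 1)
    (hstep : ∀ k, ∫ ω in {ω | 1 < X k ω}, (X (k + 1) ω : ℝ) ∂μ ≤
      (1 - α) * ∫ ω in {ω | 1 < X k ω}, (X k ω : ℝ) ∂μ) (k : ℕ) :
    μ.real {ω | 1 < X k ω} ≤ (1 - α) ^ k * n := by
  have hS : ∀ k, MeasurableSet {ω | 1 < X k ω} := fun k =>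
    hXmeas k (measurableSet_Ioi (a := (1 : ℤ)))
  have hmean : ∀ k, ∫ ω in {ω | 1 < X k ω}, (X k ω : ℝ) ∂μ ≤ (1 - α) ^ k * n := by
    intro k
    induction k with
    | zero =>
      simp only [hX0, Int.cast_natCast, setIntegral_const, smul_eq_mul, pow_zero]
      exact mul_le_mul_of_nonneg_right measureReal_le_one (Nat.cast_nonneg n)
    | succ k ih =>
      have hmono : ∫ ω in {ω | 1 < X (k + 1) ω}, (X (k + 1) ω : ℝ) ∂μ ≤
          ∫ ω in {ω | 1 < X k ω}, (X (k + 1) ω : ℝ) ∂μ := by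
        refine setIntegral_mono_set (hint (k + 1)).integrableOn ?_ ?_
        · refine ae_restrict_of_ae ?_
          filter_upwards [hpos (k + 1)] with ω h
          have : (1 : ℝ) ≤ X (k + 1) ω := by exact_mod_cast h
          simp only [Pi.zero_apply]
          linarith
        · filter_upwards [hpos k, habsorb k] with ω h1 h2 (h3 : 1 < X (k + 1) ω)
          change 1 < X k ω
          by_contra h4
          have := h2 (by omega)
          omega
      calc _ ≤ _ := hmono
        _ ≤ _ := hstep k
        _ ≤ (1 - α) * ((1 - α) ^ k * n) := mul_le_mul_of_nonneg_left ih (by linarith)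
        _ = _ := by ring
  have hmarkov : μ.real {ω | 1 < X k ω} ≤ ∫ ω in {ω | 1 < X k ω}, (X k ω : ℝ) ∂μ := by
    have h := setIntegral_mono_on (integrable_const (1 : ℝ)).integrableOn
      (hint k).integrableOn (hS k)
      (fun ω (h : 1 < X k ω) => by exact_mod_cast h.le)
    simpa using h
  exact hmarkov.trans (hmean k)

/-- If `T` is the time at which `(1 - α) ^ T` equals `n ^ (-(1 + β))`, rounding `T` down to an integer
costs a factor at most `1 / (1 - α) ≤ n`. -/
lemma pow_floor_mul_le {n : ℕ} (hn : 0 < n) {α β : ℝ} (hα : α ∈ Set.Ioo (0 : ℝ) 1)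
    (hαn : 1 ≤ (1 - α) * n) :
    (1 - α) ^ ⌊(1 + β) * Real.log n / Real.log (1 / (1 - α))⌋₊ * n ≤ (n : ℝ) ^ (1 - β) := by
  set T := (1 + β) * Real.log n / Real.log (1 / (1 - α)) with hT
  have hq : 0 < 1 - α := by linarith [hα.2]
  have hn' : (0 : ℝ) < n := by exact_mod_cast hn
  have hL : 0 < -Real.log (1 - α) := by linarith [Real.log_neg hq (by linarith [hα.1])]
  have hTL : T * -Real.log (1 - α) = (1 + β) * Real.log n := by
    rw [hT, one_div, Real.log_inv]
    exact div_mul_cancel₀ _ hL.ne'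
  have hTk : T ≤ (⌊T⌋₊ : ℝ) + 1 := (Nat.lt_floor_add_one T).le
  have hlog : 0 ≤ Real.log (1 - α) + Real.log n := by
    rw [← Real.log_mul hq.ne' hn'.ne']
    exact Real.log_nonneg hαn
  rw [← Real.log_le_log_iff (by positivity) (by positivity),
    Real.log_mul (by positivity) hn'.ne', Real.log_pow, Real.log_rpow hn']
  nlinarith [mul_le_mul_of_nonneg_right hTk hL.le]

theorem rac_rounds_high_probability {Ω : Type*} [m0 : MeasurableSpace Ω]
    (μ : Measure Ω) [IsProbabilityMeasure μ]
    (n : ℕ) (hn : 0 < n) (α β : ℝ) (hα : α ∈ Set.Ioo (0 : ℝ) 1) (hβ : 0 < β)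
    (X : ℕ → Ω → ℤ) (hXmeas : ∀ k, Measurable (X k))
    (𝓕 : ℕ → MeasurableSpace Ω)
    (h𝓕 : ∀ k, 𝓕 k = ⨆ i ∈ Finset.range (k + 1), MeasurableSpace.comap (X i) ⊤)
    (hX0 : ∀ ω, X 0 ω = (n : ℤ))
    (habsorb : ∀ᵐ ω ∂μ, ∀ k, X k ω = 1 → X (k + 1) ω = 1)
    (hstep : ∀ᵐ ω ∂μ, ∀ k, 1 < X k ω →
      1 ≤ X k ω - X (k + 1) ω ∧ X k ω - X (k + 1) ω ≤ X k ω - 1)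
    (hcond : ∀ k, ∀ᵐ ω ∂μ, 1 < X k ω →
      α * (X k ω : ℝ) ≤ (μ[fun ω' => ((X k ω' - X (k + 1) ω' : ℤ) : ℝ) | 𝓕 k]) ω)
    (τ : Ω → ℕ) (hτ : ∀ ω, τ ω = sInf {k | X k ω = 1}) :
    μ {ω | (1 + β) * Real.log n / Real.log (1 / (1 - α)) < (τ ω : ℝ)} ≤
      ENNReal.ofReal ((n : ℝ) ^ ((1 : ℝ) - β)) := by
  have hm : ∀ k, 𝓕 k ≤ m0 := fun k => by
    rw [h𝓕]
    exact iSup₂_le fun i _ => (hXmeas i).comap_le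
  have hadapt : ∀ k, Measurable[𝓕 k] (X k) := fun k => by
    rw [h𝓕]
    exact Measurable.of_comap_le
      (le_iSup₂_of_le k (Finset.self_mem_range_succ k) le_rfl)
  have hbdd : ∀ᵐ ω ∂μ, ∀ k, 1 ≤ X k ω ∧ X k ω ≤ n := by
    filter_upwards [habsorb, hstep] with ω h1 h2 k
    induction k with
    | zero => rw [hX0]; omega
    | succ k ih =>
      rcases ih.1.eq_or_lt with h | h
      · have := h1 k h.symm
        omega
      · have := h2 k h
        omega
  have hpos : ∀ k, ∀ᵐ ω ∂μ, 1 ≤ X k ω := fun k => by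
    filter_upwards [hbdd] with ω h using (h k).1
  have hint : ∀ k, Integrable (fun ω => (X k ω : ℝ)) μ := fun k => by
    refine Integrable.of_bound
      ((measurable_from_top (f := fun z : ℤ => (z : ℝ))).comp (hXmeas k)).aestronglyMeasurable
      (n : ℝ) ?_
    filter_upwards [hbdd] with ω h
    have h1 : (1 : ℝ) ≤ X k ω := by exact_mod_cast (h k).1
    have h2 : (X k ω : ℝ) ≤ n := by exact_mod_cast (h k).2
    rw [Real.norm_eq_abs, abs_le]
    constructor <;> linarith
  have hdrift : ∀ k, ∫ ω in {ω | 1 < X k ω}, (X (k + 1) ω : ℝ) ∂μ ≤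
      (1 - α) * ∫ ω in {ω | 1 < X k ω}, (X k ω : ℝ) ∂μ := fun k =>
    setIntegral_step (hm k) (hadapt k) (hint k) (hint (k + 1)) (hcond k)
  rcases (show 1 ≤ n from hn).eq_or_lt with rfl | hn2
  · have hτ0 : ∀ ω, τ ω = 0 := fun ω => by
      rw [hτ]
      exact Nat.sInf_eq_zero.2 (Or.inl (by simp [hX0]))
    simp [hτ0]
  -- The first step cannot go below `1`, which bounds `1 / (1 - α)` by `n`.
  have hαn : 1 ≤ (1 - α) * (n : ℝ) := by
    have h0 : {ω | 1 < X 0 ω} = Set.univ := by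
      ext ω
      simp only [hX0, Set.mem_ofPred_eq, Set.mem_univ, iff_true]
      exact_mod_cast hn2
    have h1 := hdrift 0
    rw [h0, setIntegral_univ, setIntegral_univ] at h1
    simp only [hX0, Int.cast_natCast, integral_const, probReal_univ, one_smul] at h1
    have h2 : ∫ _, (1 : ℝ) ∂μ ≤ ∫ ω, (X (0 + 1) ω : ℝ) ∂μ := by
      refine integral_mono_ae (integrable_const _) (hint _) ?_
      filter_upwards [hpos (0 + 1)] with ω h
      exact_mod_cast h
    simp only [integral_const, probReal_univ, one_smul] at h2
    exact h2.trans h1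
  set T := (1 + β) * Real.log n / Real.log (1 / (1 - α)) with hT
  have hsub : μ {ω | T < (τ ω : ℝ)} ≤ μ {ω | 1 < X ⌊T⌋₊ ω} := by
    refine measure_mono_ae ?_
    filter_upwards [hpos ⌊T⌋₊] with ω h1 (h2 : T < (τ ω : ℝ))
    refine lt_of_le_of_ne h1 fun h => ?_
    have hle : τ ω ≤ ⌊T⌋₊ := by
      rw [hτ]
      exact Nat.sInf_le h.symm
    -- `T ≥ 0`, so its natural-number floor really lies below it.
    have hT0 : 0 ≤ T := by
      refine div_nonneg (mul_nonneg (by linarith) (Real.log_natCast_nonneg n)) ?_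
      refine Real.log_nonneg ?_
      rw [le_div_iff₀ (by linarith [hα.2])]
      linarith [hα.1]
    have : (τ ω : ℝ) ≤ T := (Nat.cast_le.2 hle).trans (Nat.floor_le hT0)
    linarith
  refine hsub.trans ?_
  rw [← ofReal_measureReal]
  exact ENNReal.ofReal_le_ofReal <|
    (measureReal_gt_one_le hα.2 hXmeas hint hX0 hpos (fun k => habsorb.mono fun ω h => h k)
      hdrift ⌊T⌋₊).trans (pow_floor_mul_le hn hα hαn)
end

section
/- Let G be a finite connected simple graph on k ≥ 2 vertices with maximum degree at most d (d ≥ 1). Assign to the edges of G a uniformly random bijective labeling by {1, …, m}, where m is the number of edges. Call an edge e locally minimal if its label is smaller than the label of every other edge sharing an endpoint with e. Then the expected number of locally minimal edges is at least (k−1)/(2d). -/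
/-!
Fix an edge `e = uv` and let `N` be the set of edges meeting `{u, v}`, including `e`. Some element
of `N` carries the smallest label on `N`, and exchanging the labels of two elements of `N` shows
that each is equally likely to be the one, so `e` is locally minimal with probability `1 / #N`
(`card_equiv_le_mul_card_isMin` is the inequality needed). Every edge of `N` is incident to `u` or
to `v`, so `#N ≤ 2 * d` (`card_touching_le`). Summing over the edges, of which a connected graph
on `k` vertices has at least `k - 1`, gives the bound by linearity of expectation.
-/

open scoped Classical

/-- An edge `e` is locally minimal under the labeling `ℓ` if its label is smaller
than the label of every other edge sharing an endpoint with it. -/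
def LocallyMinimalEdge {V : Type*} [Fintype V] (G : SimpleGraph V) [Fintype G.edgeSet]
    {m : ℕ} (ℓ : G.edgeFinset ≃ Fin m) (e : G.edgeFinset) : Prop :=
  ∀ e' : G.edgeFinset, e' ≠ e →
    (∃ v, v ∈ (e : Sym2 V) ∧ v ∈ (e' : Sym2 V)) → ℓ e < ℓ e'

/-- A fixed element `e` of `S` has the smallest label on `S` in at least a `1 / #S` fraction of all
bijective labelings. -/
lemma card_equiv_le_mul_card_isMin {α : Type*} [Fintype α] [DecidableEq α] {n : ℕ}
    (S : Finset α) (e : α) (he : e ∈ S) :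
    Fintype.card (α ≃ Fin n) ≤ S.card *
      (Finset.univ.filter fun ℓ : α ≃ Fin n => ∀ f ∈ S, f ≠ e → ℓ e < ℓ f).card := by
  set A : α → Finset (α ≃ Fin n) := fun g =>
    Finset.univ.filter fun ℓ : α ≃ Fin n => ∀ f ∈ S, f ≠ g → ℓ g < ℓ f with hA
  have hcover : (Finset.univ : Finset (α ≃ Fin n)) ⊆ S.biUnion A := by
    intro ℓ _
    obtain ⟨g, hg, hmin⟩ := S.exists_min_image ℓ ⟨e, he⟩
    simp only [hA, Finset.mem_biUnion, Finset.mem_filter, Finset.mem_univ, true_and]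
    exact ⟨g, hg, fun f hf hne =>
      lt_of_le_of_ne (hmin f hf) fun h => hne (ℓ.injective h).symm⟩
  -- Precomposing with the transposition of `e` and `g` carries `A g` into `A e`.
  have hswap : ∀ g ∈ S, (A g).card ≤ (A e).card := by
    intro g hg
    refine Finset.card_le_card_of_injOn (fun ℓ => (Equiv.swap e g).trans ℓ) ?_ ?_
    · intro ℓ hℓ
      simp only [hA, Finset.coe_filter, Finset.mem_univ, true_and, Set.mem_ofPred_eq] at hℓ ⊢
      intro f hf hne
      simp only [Equiv.trans_apply, Equiv.swap_apply_left]
      by_cases hfg : f = g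
      · subst hfg
        simpa using hℓ e he (Ne.symm hne)
      · rw [Equiv.swap_apply_of_ne_of_ne hne hfg]
        exact hℓ f hf hfg
    · intro ℓ₁ _ ℓ₂ _ h
      ext x
      have := congrArg (fun q : α ≃ Fin n => q (Equiv.swap e g x)) h
      simpa using congrArg Fin.val this
  calc Fintype.card (α ≃ Fin n) = (Finset.univ : Finset (α ≃ Fin n)).card := rfl
    _ ≤ (S.biUnion A).card := Finset.card_le_card hcover
    _ ≤ S.card * (A e).card := Finset.card_biUnion_le_card_mul _ _ _ hswap

lemma card_touching_le {V : Type*} [Fintype V] (G : SimpleGraph V) [DecidableRel G.Adj]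
    [Fintype G.edgeSet] (d : ℕ) (hdeg : ∀ v, G.degree v ≤ d) (e : G.edgeFinset) :
    (Finset.univ.filter fun f : G.edgeFinset =>
      ∃ v, v ∈ (e : Sym2 V) ∧ v ∈ (f : Sym2 V)).card ≤ 2 * d := by
  obtain ⟨e, he⟩ := e
  induction e using Sym2.ind with
  | _ u v =>
    have hsub : (Finset.univ.filter fun f : G.edgeFinset =>
        ∃ w, w ∈ s(u, v) ∧ w ∈ (f : Sym2 V)).map (Function.Embedding.subtype _) ⊆
        G.incidenceFinset u ∪ G.incidenceFinset v := by
      intro f hf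
      simp only [Finset.mem_map, Finset.mem_filter, Finset.mem_univ, true_and] at hf
      obtain ⟨f, ⟨w, hw, hwf⟩, rfl⟩ := hf
      have hfe : (f : Sym2 V) ∈ G.edgeSet := SimpleGraph.mem_edgeFinset.mp f.2
      simp only [Finset.mem_union, SimpleGraph.mem_incidenceFinset]
      rcases Sym2.mem_iff.mp hw with rfl | rfl
      · exact Or.inl ⟨hfe, hwf⟩
      · exact Or.inr ⟨hfe, hwf⟩
    have h1 := Finset.card_le_card hsub
    have h2 := Finset.card_union_le (G.incidenceFinset u) (G.incidenceFinset v)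
    rw [Finset.card_map] at h1
    rw [SimpleGraph.card_incidenceFinset_eq_degree,
      SimpleGraph.card_incidenceFinset_eq_degree] at h2
    have := hdeg u
    have := hdeg v
    simp only at h1 ⊢
    omega

theorem expected_locally_minimal_edges {V : Type*} [Fintype V]
    (G : SimpleGraph V) [DecidableRel G.Adj] [Fintype G.edgeSet]
    (hconn : G.Connected)
    (k d : ℕ) (hk : 2 ≤ k) (hd : 1 ≤ d)
    (hcard : Fintype.card V = k)
    (hdeg : ∀ v, G.degree v ≤ d) :
    ((k : ℝ) - 1) / (2 * d) ≤
      (∑ ℓ : G.edgeFinset ≃ Fin G.edgeFinset.card,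
          ((Finset.univ.filter fun e : G.edgeFinset => LocallyMinimalEdge G ℓ e).card : ℝ)) /
        (Nat.factorial G.edgeFinset.card) := by
  set m := G.edgeFinset.card with hm
  have hkm : k ≤ m + 1 := by
    have h := hconn.card_vert_le_card_edgeSet_add_one
    rwa [Nat.card_eq_fintype_card, Nat.card_eq_fintype_card, hcard,
      ← SimpleGraph.edgeFinset_card] at h
  have hfact : Fintype.card (G.edgeFinset ≃ Fin m) = m.factorial := by
    rw [Fintype.card_equiv (Fintype.equivFinOfCardEq (Fintype.card_coe _)), Fintype.card_coe]
  have hedge : ∀ e : G.edgeFinset, m.factorial ≤ 2 * d *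
      (Finset.univ.filter fun ℓ : G.edgeFinset ≃ Fin m => LocallyMinimalEdge G ℓ e).card := by
    intro e
    have h := card_equiv_le_mul_card_isMin (n := m)
      (Finset.univ.filter fun f : G.edgeFinset => ∃ v, v ∈ (e : Sym2 V) ∧ v ∈ (f : Sym2 V)) e
      (by simpa using ⟨_, Sym2.out_fst_mem (e : Sym2 V)⟩)
    rw [hfact] at h
    refine h.trans (Nat.mul_le_mul (card_touching_le G d hdeg e) (Finset.card_le_card ?_))
    intro ℓ hℓ
    simp only [Finset.mem_filter, Finset.mem_univ, true_and] at hℓ ⊢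
    exact fun f hne hf => hℓ f hf hne
  have hdouble : (∑ ℓ : G.edgeFinset ≃ Fin m,
      (Finset.univ.filter fun e : G.edgeFinset => LocallyMinimalEdge G ℓ e).card) =
      ∑ e : G.edgeFinset,
        (Finset.univ.filter fun ℓ : G.edgeFinset ≃ Fin m => LocallyMinimalEdge G ℓ e).card := by
    simp only [Finset.card_filter]
    exact Finset.sum_comm
  have hsum : m * m.factorial ≤ 2 * d * ∑ ℓ : G.edgeFinset ≃ Fin m,
      (Finset.univ.filter fun e : G.edgeFinset => LocallyMinimalEdge G ℓ e).card := by
    rw [hdouble, Finset.mul_sum]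
    calc m * m.factorial = ∑ _e : G.edgeFinset, m.factorial := by
          simp [hm]
      _ ≤ _ := Finset.sum_le_sum fun e _ => hedge e
  have hd' : (0 : ℝ) < 2 * d := by
    have : (1 : ℝ) ≤ d := by exact_mod_cast hd
    linarith
  have hf' : (0 : ℝ) < m.factorial := by exact_mod_cast m.factorial_pos
  rw [div_le_div_iff₀ hd' hf']
  have hsum' : (m : ℝ) * m.factorial ≤ 2 * d * ∑ ℓ : G.edgeFinset ≃ Fin m,
      ((Finset.univ.filter fun e : G.edgeFinset => LocallyMinimalEdge G ℓ e).card : ℝ) := by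
    exact_mod_cast hsum
  have hkm' : (k : ℝ) - 1 ≤ m := by
    have : (k : ℝ) ≤ m + 1 := by exact_mod_cast hkm
    linarith
  calc ((k : ℝ) - 1) * m.factorial ≤ m * m.factorial := by gcongr
    _ ≤ _ := hsum'
    _ = _ := mul_comm _ _
end

section
/- Let G be a finite simple graph with m edges and maximum degree at most d. Assign to the edges of G a uniformly random bijective labeling by {1, …, m}. For each edge e_i let Y_i be the indicator that e_i is locally minimal (its label is smaller than the labels of all other edges sharing an endpoint with e_i), and let M = ∑_{i=1}^{m} Y_i. Then Var(M) ≤ (d² + 1) · m. -/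
/-!
The covariances of the local-minimality indicators are bounded one pair at a time. Let `Y_e` be
the indicator that `e` is locally minimal, and write `N e` for the closed neighbourhood of `e`
in the line graph, `A = |N e|`, `B = |N f|`, `c = |N e ∩ N f|` and `n = |N e ∪ N f|`. An element is the minimum of a given set `T` with probability `1 / |T|`, even
conditionally on an event that is invariant under relabelings permuting `T`
(`card_mul_card_min`). Hence `P(Y_e = 1) = 1 / A`, and if `f ∉ N e`, then, according to which of `e`,
`f` has the smaller label, `P(Y_e = Y_f = 1) ≤ (1 / n) (1 / B + 1 / A)`, so
`Cov(Y_e, Y_f) ≤ (A + B - n) / (n A B) = c / (n A B) ≤ c / A`. If `f ≠ e` lies in `N e`, both events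
cannot occur together, and for `f = e` the bound `c / A` equals `1`. Thus
`Cov(Y_e, Y_f) ≤ c / A` always (`cov_le`).

Summing over `f`, double counting gives `∑ f, |N e ∩ N f| = ∑ g ∈ N e, |N g| ≤ A * 2d`, so that the
variance is at most `2d * m ≤ (d² + 1) * m`.
-/

open scoped Classical

/-! ### Minima of random labelings on nested sets -/

/-- No element of `S` has a smaller label than `e`; membership `e ∈ S` is not required. -/
def IsMinOn' {α : Type*} {m : ℕ} (ℓ : α ≃ Fin m) (S : Finset α) (e : α) : Prop :=
  ∀ g ∈ S, ℓ e ≤ ℓ g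

/-- If the event `P` is invariant under swapping labels inside `T`, then conditionally on `P` each
`f ∈ T` is the minimum of `T` with probability `1 / |T|`. -/
lemma card_mul_card_min {α : Type*} [Fintype α] [DecidableEq α] {m : ℕ}
    (P : (α ≃ Fin m) → Prop) (T : Finset α)
    (hP : ∀ x ∈ T, ∀ y ∈ T, ∀ ℓ, P ℓ → P ((Equiv.swap x y).trans ℓ))
    (f : α) (hf : f ∈ T) :
    T.card * (Finset.univ.filter fun ℓ : α ≃ Fin m => P ℓ ∧ IsMinOn' ℓ T f).card =
      (Finset.univ.filter fun ℓ : α ≃ Fin m => P ℓ).card := by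
  have hle : ∀ x ∈ T, ∀ y ∈ T,
      (Finset.univ.filter fun ℓ : α ≃ Fin m => P ℓ ∧ IsMinOn' ℓ T x).card ≤
      (Finset.univ.filter fun ℓ : α ≃ Fin m => P ℓ ∧ IsMinOn' ℓ T y).card := by
    intro x hx y hy
    apply Finset.card_le_card_of_injOn (fun ℓ => (Equiv.swap x y).trans ℓ)
    · intro ℓ hℓ
      simp only [Finset.coe_filter, Finset.mem_univ, true_and, Set.mem_ofPred_eq] at hℓ ⊢
      refine ⟨hP x hx y hy ℓ hℓ.1, fun g hg => ?_⟩
      simp only [Equiv.trans_apply, Equiv.swap_apply_right]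
      apply hℓ.2
      rw [Equiv.swap_apply_def]
      split_ifs <;> assumption
    · intro a _ b _ hab
      ext z
      have := congrArg (fun q : α ≃ Fin m => q (Equiv.swap x y z)) hab
      simpa using congrArg Fin.val this
  have hmain : (Finset.univ.filter fun ℓ : α ≃ Fin m => P ℓ) =
      T.biUnion fun y => Finset.univ.filter fun ℓ : α ≃ Fin m => P ℓ ∧ IsMinOn' ℓ T y := by
    ext ℓ
    simp only [Finset.mem_filter, Finset.mem_univ, true_and, Finset.mem_biUnion]
    constructor
    · intro h
      obtain ⟨y, hy, hmin⟩ := Finset.exists_min_image T ℓ ⟨f, hf⟩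
      exact ⟨y, hy, h, hmin⟩
    · rintro ⟨y, _, h, _⟩
      exact h
  rw [hmain, Finset.card_biUnion]
  · rw [Finset.sum_congr rfl fun y hy => le_antisymm (hle y hy f hf) (hle f hf y hy)]
    simp
  · intro x hx y hy hxy
    rw [Function.onFun, Finset.disjoint_left]
    intro ℓ h1 h2
    simp only [Finset.mem_filter, Finset.mem_univ, true_and] at h1 h2
    exact hxy (ℓ.injective (le_antisymm (h1.2 y hy) (h2.2 x hx)))

lemma card_mul_card_min_univ {α : Type*} [Fintype α] [DecidableEq α] {m : ℕ}
    (hm : Fintype.card α = m) (S : Finset α) (e : α) (he : e ∈ S) :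
    S.card * (Finset.univ.filter fun ℓ : α ≃ Fin m => IsMinOn' ℓ S e).card = m.factorial := by
  have h := card_mul_card_min (m := m) (fun _ => True) S (fun _ _ _ _ _ h => h) e he
  simp only [true_and, Finset.filter_true] at h
  rw [h, Finset.card_univ, Fintype.card_equiv (Fintype.equivFinOfCardEq hm), hm]

lemma card_mul_card_min_min {α : Type*} [Fintype α] [DecidableEq α] {m : ℕ}
    (hm : Fintype.card α = m) (S T : Finset α) (hTS : T ⊆ S) (e f : α) (he : e ∈ S) (heT : e ∉ T)
    (hf : f ∈ T) :
    S.card * (T.card * (Finset.univ.filter fun ℓ : α ≃ Fin m =>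
      IsMinOn' ℓ S e ∧ IsMinOn' ℓ T f).card) = m.factorial := by
  rw [card_mul_card_min (fun ℓ => IsMinOn' ℓ S e) T _ f hf, card_mul_card_min_univ hm S e he]
  intro x hx y hy ℓ h g hg
  have hex : e ≠ x := by rintro rfl; exact heT hx
  have hey : e ≠ y := by rintro rfl; exact heT hy
  simp only [Equiv.trans_apply, Equiv.swap_apply_of_ne_of_ne hex hey]
  apply h
  rw [Equiv.swap_apply_def]
  split_ifs
  · exact hTS hy
  · exact hTS hx
  · exact hg

/-! ### Covariances and the abstract variance bound -/

/-- The covariance of the indicators of two local minima is at most `|N e ∩ N f| / |N e|`. -/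
lemma cov_le {α : Type*} [Fintype α] [DecidableEq α] {m : ℕ}
    (hm : Fintype.card α = m) (N : α → Finset α) (hself : ∀ e, e ∈ N e)
    (hsymm : ∀ e f, e ∈ N f → f ∈ N e) (e f : α) :
    ((Finset.univ.filter fun ℓ : α ≃ Fin m =>
        IsMinOn' ℓ (N e) e ∧ IsMinOn' ℓ (N f) f).card : ℝ) / m.factorial -
      ((Finset.univ.filter fun ℓ : α ≃ Fin m => IsMinOn' ℓ (N e) e).card : ℝ) / m.factorial *
      (((Finset.univ.filter fun ℓ : α ≃ Fin m => IsMinOn' ℓ (N f) f).card : ℝ) / m.factorial) ≤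
      ((N e ∩ N f).card : ℝ) / (N e).card := by
  have hF : (0 : ℝ) < m.factorial := by exact_mod_cast m.factorial_pos
  by_cases hef : f ∈ N e
  · by_cases h : e = f
    · subst h
      have hA : (0 : ℝ) < (N e).card := by exact_mod_cast Finset.card_pos.2 ⟨e, hself e⟩
      rw [Finset.inter_self, div_self hA.ne']
      have h1 : ((Finset.univ.filter fun ℓ : α ≃ Fin m =>
          IsMinOn' ℓ (N e) e ∧ IsMinOn' ℓ (N e) e).card : ℝ) / m.factorial ≤ 1 := by
        have hcard : Fintype.card (α ≃ Fin m) = m.factorial := by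
          rw [Fintype.card_equiv (Fintype.equivFinOfCardEq hm), hm]
        rw [div_le_one hF, ← hcard]
        exact_mod_cast Finset.card_le_univ _
      have h2 : 0 ≤ ((Finset.univ.filter fun ℓ : α ≃ Fin m => IsMinOn' ℓ (N e) e).card : ℝ) /
          m.factorial := by positivity
      nlinarith
    · have h0 : (Finset.univ.filter fun ℓ : α ≃ Fin m =>
          IsMinOn' ℓ (N e) e ∧ IsMinOn' ℓ (N f) f) = ∅ := by
        apply Finset.filter_eq_empty_iff.2
        rintro ℓ _ ⟨h1, h2⟩
        exact h (ℓ.injective (le_antisymm (h1 f hef) (h2 e (hsymm _ _ hef))))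
      rw [h0, Finset.card_empty, Nat.cast_zero, zero_div, zero_sub]
      refine le_trans (neg_nonpos.2 (by positivity)) (by positivity)
  · have hfe : e ∉ N f := fun h => hef (hsymm _ _ h)
    set S := N e ∪ N f with hS
    have p1 := card_mul_card_min_univ hm (N e) e (hself e)
    have p2 := card_mul_card_min_univ hm (N f) f (hself f)
    have q1 := card_mul_card_min_min hm S (N f) Finset.subset_union_right e f
      (Finset.mem_union_left _ (hself e)) hfe (hself f)
    have q2 := card_mul_card_min_min hm S (N e) Finset.subset_union_left f e
      (Finset.mem_union_right _ (hself f)) hef (hself e)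
    have hJ : (Finset.univ.filter fun ℓ : α ≃ Fin m =>
        IsMinOn' ℓ (N e) e ∧ IsMinOn' ℓ (N f) f).card ≤
        (Finset.univ.filter fun ℓ : α ≃ Fin m => IsMinOn' ℓ S e ∧ IsMinOn' ℓ (N f) f).card +
        (Finset.univ.filter fun ℓ : α ≃ Fin m => IsMinOn' ℓ S f ∧ IsMinOn' ℓ (N e) e).card := by
      refine le_trans (Finset.card_le_card ?_) (Finset.card_union_le _ _)
      intro ℓ h
      simp only [Finset.mem_union, Finset.mem_filter, Finset.mem_univ, true_and] at h ⊢
      obtain ⟨h1, h2⟩ := h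
      rcases le_total (ℓ e) (ℓ f) with hl | hl
      · refine Or.inl ⟨fun g hg => ?_, h2⟩
        rcases Finset.mem_union.1 hg with hg | hg
        · exact h1 g hg
        · exact hl.trans (h2 g hg)
      · refine Or.inr ⟨fun g hg => ?_, h1⟩
        rcases Finset.mem_union.1 hg with hg | hg
        · exact hl.trans (h1 g hg)
        · exact h2 g hg
    have hc := Finset.card_union_add_card_inter (N e) (N f)
    rw [← hS] at hc
    have hA : 0 < (N e).card := Finset.card_pos.2 ⟨e, hself e⟩
    have hB : 0 < (N f).card := Finset.card_pos.2 ⟨f, hself f⟩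
    have hn : 0 < S.card := Finset.card_pos.2 ⟨e, Finset.mem_union_left _ (hself e)⟩
    generalize (Finset.univ.filter fun ℓ : α ≃ Fin m =>
        IsMinOn' ℓ (N e) e ∧ IsMinOn' ℓ (N f) f).card = J at *
    generalize (Finset.univ.filter fun ℓ : α ≃ Fin m =>
        IsMinOn' ℓ S e ∧ IsMinOn' ℓ (N f) f).card = J1 at *
    generalize (Finset.univ.filter fun ℓ : α ≃ Fin m =>
        IsMinOn' ℓ S f ∧ IsMinOn' ℓ (N e) e).card = J2 at *
    generalize (Finset.univ.filter fun ℓ : α ≃ Fin m => IsMinOn' ℓ (N e) e).card = P1 at *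
    generalize (Finset.univ.filter fun ℓ : α ≃ Fin m => IsMinOn' ℓ (N f) f).card = P2 at *
    generalize (N e ∩ N f).card = c at *
    generalize S.card = n at *
    generalize (N e).card = A at *
    generalize (N f).card = B at *
    generalize m.factorial = F at *
    have hA1 : (1 : ℝ) ≤ A := by exact_mod_cast hA
    have hB1 : (1 : ℝ) ≤ B := by exact_mod_cast hB
    have hn1 : (1 : ℝ) ≤ n := by exact_mod_cast hn
    have hcR : (n : ℝ) + c = A + B := by exact_mod_cast hc
    have hJR : (J : ℝ) ≤ J1 + J2 := by exact_mod_cast hJ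
    have p1R : (A : ℝ) * P1 = F := by exact_mod_cast p1
    have p2R : (B : ℝ) * P2 = F := by exact_mod_cast p2
    have q1R : (n : ℝ) * (B * J1) = F := by exact_mod_cast q1
    have q2R : (n : ℝ) * (A * J2) = F := by exact_mod_cast q2
    have e1 : (P1 : ℝ) / F = 1 / A := by
      rw [div_eq_div_iff hF.ne' (by positivity)]; linarith
    have e2 : (P2 : ℝ) / F = 1 / B := by
      rw [div_eq_div_iff hF.ne' (by positivity)]; linarith
    have e3 : (J1 : ℝ) / F = 1 / (n * B) := by
      rw [div_eq_div_iff hF.ne' (by positivity)]; linarith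
    have e4 : (J2 : ℝ) / F = 1 / (n * A) := by
      rw [div_eq_div_iff hF.ne' (by positivity)]; linarith
    have e5 : (J : ℝ) / F ≤ 1 / (n * B) + 1 / (n * A) := by
      rw [← e3, ← e4, ← add_div]; gcongr
    have e6 : 1 / ((n : ℝ) * B) + 1 / (n * A) - 1 / A * (1 / B) = c / A / (n * B) := by
      have : (c : ℝ) = A + B - n := by linarith
      rw [this]; field_simp
    have e7 : (c : ℝ) / A / (n * B) ≤ c / A :=
      div_le_self (by positivity) (by nlinarith)
    rw [e1, e2]
    linarith

/-- The variance bound for an abstract symmetric reflexive neighbourhood relation whose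
neighbourhoods have at most `k` elements. -/
lemma variance_le {α : Type*} [Fintype α] [DecidableEq α] {m : ℕ}
    (hm : Fintype.card α = m) (N : α → Finset α) (hself : ∀ e, e ∈ N e)
    (hsymm : ∀ e f, e ∈ N f → f ∈ N e) (k : ℕ) (hk : ∀ e, (N e).card ≤ k) :
    (∑ ℓ : α ≃ Fin m,
        (((Finset.univ.filter fun e => IsMinOn' ℓ (N e) e).card : ℕ) : ℝ) ^ 2) / m.factorial -
      ((∑ ℓ : α ≃ Fin m,
        (((Finset.univ.filter fun e => IsMinOn' ℓ (N e) e).card : ℕ) : ℝ)) / m.factorial) ^ 2 ≤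
      (k : ℝ) * m := by
  have h1 : ∀ ℓ : α ≃ Fin m,
      (((Finset.univ.filter fun e => IsMinOn' ℓ (N e) e).card : ℕ) : ℝ) =
        ∑ e, if IsMinOn' ℓ (N e) e then (1 : ℝ) else 0 := fun ℓ => by simp
  have hS1 : (∑ ℓ : α ≃ Fin m,
      (((Finset.univ.filter fun e => IsMinOn' ℓ (N e) e).card : ℕ) : ℝ)) =
      ∑ e, ((Finset.univ.filter fun ℓ : α ≃ Fin m => IsMinOn' ℓ (N e) e).card : ℝ) := by
    simp_rw [h1]
    rw [Finset.sum_comm]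
    simp
  have hS2 : (∑ ℓ : α ≃ Fin m,
      (((Finset.univ.filter fun e => IsMinOn' ℓ (N e) e).card : ℕ) : ℝ) ^ 2) =
      ∑ e, ∑ f, ((Finset.univ.filter fun ℓ : α ≃ Fin m =>
        IsMinOn' ℓ (N e) e ∧ IsMinOn' ℓ (N f) f).card : ℝ) := by
    simp_rw [h1, sq, Finset.sum_mul_sum]
    rw [Finset.sum_comm]
    refine Finset.sum_congr rfl fun e _ => ?_
    rw [Finset.sum_comm]
    refine Finset.sum_congr rfl fun f _ => ?_
    rw [Finset.card_filter]
    push_cast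
    refine Finset.sum_congr rfl fun ℓ _ => ?_
    by_cases ha : IsMinOn' ℓ (N e) e <;> by_cases hb : IsMinOn' ℓ (N f) f <;> simp [ha, hb]
  rw [hS1, hS2, Finset.sum_div, Finset.sum_div, sq, Finset.sum_mul_sum, ← Finset.sum_sub_distrib]
  have hrow : ∀ e : α, ∑ f, ((N e ∩ N f).card : ℝ) / (N e).card ≤ k := by
    intro e
    have hA : (0 : ℝ) < (N e).card := by exact_mod_cast Finset.card_pos.2 ⟨e, hself e⟩
    rw [← Finset.sum_div, div_le_iff₀ hA]
    have : ∑ f, (N e ∩ N f).card = ∑ g ∈ N e, (N g).card := by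
      have h2 : ∀ f, (N e ∩ N f).card = ∑ g ∈ N e, if g ∈ N f then 1 else 0 := by
        intro f
        rw [← Finset.card_filter, Finset.filter_mem_eq_inter]
      simp_rw [h2]
      rw [Finset.sum_comm]
      refine Finset.sum_congr rfl fun g _ => ?_
      rw [← Finset.card_filter]
      congr 1
      ext f
      simpa using ⟨hsymm g f, hsymm f g⟩
    have h3 : ∑ g ∈ N e, (N g).card ≤ k * (N e).card := by
      refine (Finset.sum_le_card_nsmul _ _ k fun g _ => hk g).trans ?_
      simp [mul_comm]
    rw [← this] at h3
    exact_mod_cast h3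
  calc _ ≤ ∑ _e : α, (k : ℝ) := by
        refine Finset.sum_le_sum fun e _ => le_trans ?_ (hrow e)
        rw [Finset.sum_div, ← Finset.sum_sub_distrib]
        exact Finset.sum_le_sum fun f _ => cov_le hm N hself hsymm e f
    _ = _ := by simp [hm, mul_comm]

/-! ### Locally minimal edges of a graph -/

theorem variance_of_locally_minimal_edge_count {V : Type*} [Fintype V]
    (G : SimpleGraph V) [DecidableRel G.Adj] [Fintype G.edgeSet]
    (m d : ℕ) (hm : G.edgeFinset.card = m)
    (hdeg : ∀ v, G.degree v ≤ d)
    (M : (G.edgeFinset ≃ Fin m) → ℕ)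
    (hM : ∀ ℓ, M ℓ =
      (Finset.univ.filter fun e : G.edgeFinset => LocallyMinimalEdge G ℓ e).card) :
    (∑ ℓ : G.edgeFinset ≃ Fin m, ((M ℓ : ℝ)) ^ 2) / (Nat.factorial m) -
        ((∑ ℓ : G.edgeFinset ≃ Fin m, (M ℓ : ℝ)) / (Nat.factorial m)) ^ 2 ≤
      ((d : ℝ) ^ 2 + 1) * m := by
  let N : G.edgeFinset → Finset G.edgeFinset := fun e =>
    Finset.univ.filter fun g => ∃ v, v ∈ (e : Sym2 V) ∧ v ∈ (g : Sym2 V)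
  have hself : ∀ e, e ∈ N e := by
    rintro ⟨e, he⟩
    simp only [N, Finset.mem_filter, Finset.mem_univ, true_and]
    induction e using Sym2.ind with
    | _ u v => exact ⟨u, by simp⟩
  have hsymm : ∀ e f, e ∈ N f → f ∈ N e := by
    intro e f h
    simp only [N, Finset.mem_filter, Finset.mem_univ, true_and] at h ⊢
    obtain ⟨v, h1, h2⟩ := h
    exact ⟨v, h2, h1⟩
  have hk : ∀ e, (N e).card ≤ 2 * d := by
    rintro ⟨e, he⟩
    induction e using Sym2.ind with
    | _ u v =>
      have h1 : (N ⟨s(u, v), he⟩).card ≤ (G.incidenceFinset u ∪ G.incidenceFinset v).card := by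
        apply Finset.card_le_card_of_injOn (fun g : G.edgeFinset => (g : Sym2 V))
        · rintro ⟨g, hg⟩ h
          simp only [N, Finset.coe_filter, Finset.mem_univ, true_and, Set.mem_ofPred_eq,
            Sym2.mem_iff] at h
          have hg' : g ∈ G.edgeSet := SimpleGraph.mem_edgeFinset.1 hg
          simp only [Finset.coe_union, Set.mem_union, Finset.mem_coe,
            SimpleGraph.mem_incidenceFinset, SimpleGraph.incidenceSet, Set.mem_ofPred_eq]
          obtain ⟨w, rfl | rfl, hw⟩ := h
          · exact Or.inl ⟨hg', hw⟩
          · exact Or.inr ⟨hg', hw⟩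
        · exact Subtype.val_injective.injOn
      have h2 := Finset.card_union_le (G.incidenceFinset u) (G.incidenceFinset v)
      rw [SimpleGraph.card_incidenceFinset_eq_degree,
        SimpleGraph.card_incidenceFinset_eq_degree] at h2
      have := hdeg u
      have := hdeg v
      omega
  have hloc : ∀ (ℓ : G.edgeFinset ≃ Fin m) e,
      LocallyMinimalEdge G ℓ e ↔ IsMinOn' ℓ (N e) e := by
    intro ℓ e
    constructor
    · intro h g hg
      by_cases hge : g = e
      · rw [hge]
      · exact (h g hge (Finset.mem_filter.1 hg).2).le
    · intro h g hge hg
      exact lt_of_le_of_ne (h g (Finset.mem_filter.2 ⟨Finset.mem_univ _, hg⟩))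
        fun h' => hge (ℓ.injective h').symm
  have key := variance_le (m := m) (by rw [Fintype.card_coe, hm]) N hself hsymm (2 * d) hk
  simp_rw [hM, hloc]
  refine key.trans ?_
  push_cast
  -- `2d ≤ d² + 1` is `0 ≤ (d - 1)²`.
  exact mul_le_mul_of_nonneg_right (by nlinarith [sq_nonneg ((d : ℝ) - 1)]) (Nat.cast_nonneg m)
end

section
/- Let G be a finite simple graph with a uniformly random bijective edge labeling by {1, …, m}. Let e and f be two edges of G that do not share an endpoint and such that no edge of G shares an endpoint with both e and f. Then the events 'e is locally minimal' and 'f is locally minimal' are independent. -/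
/-!
Let `A` and `B` be the closed neighbourhoods of `e` and `f` in the line graph; the hypotheses say
exactly that they are disjoint, and local minimality of `e` says that `e` carries the least label
on `A`. Composing a labeling with a transposition of two edges of `A` moves the position of the
minimum on `A`, but does not affect any event `P` that is blind to such transpositions. Hence, given
`P`, each element of `A` is equally likely to carry the minimum: `|A| * #(E ∩ P) = #P`, where `E` is
the event that `e` is locally minimal. Taking for `P` the sure event and the event that `f` is
locally minimal yields independence, without evaluating the second probability.
-/

open scoped Classical

/-- If `P` is invariant under transpositions inside `A`, then among the labelings satisfying `P`
the minimum over `A` is attained at each element of `A` equally often. -/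
lemma card_mul_card_min_eq {α : Type*} [Fintype α] [DecidableEq α] {m : ℕ} (A : Finset α) (a : α) (ha : a ∈ A)
    (P : (α ≃ Fin m) → Prop)
    (hP : ∀ ℓ, ∀ x ∈ A, P ℓ → P ((Equiv.swap a x).trans ℓ)) :
    A.card * (Finset.univ.filter fun ℓ : α ≃ Fin m => (∀ x ∈ A, ℓ a ≤ ℓ x) ∧ P ℓ).card =
      (Finset.univ.filter fun ℓ : α ≃ Fin m => P ℓ).card := by
  have hswap : ∀ b ∈ A, ∀ x ∈ A, Equiv.swap a b x ∈ A := by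
    intro b hb x hx
    rw [Equiv.swap_apply_def]
    split_ifs <;> assumption
  have heq : ∀ b ∈ A,
      ((Finset.univ.filter fun ℓ : α ≃ Fin m => P ℓ).filter
        fun ℓ => ∀ x ∈ A, ℓ b ≤ ℓ x).card =
      (Finset.univ.filter fun ℓ : α ≃ Fin m => (∀ x ∈ A, ℓ a ≤ ℓ x) ∧ P ℓ).card := by
    intro b hb
    refine Finset.card_bij' (fun ℓ _ => (Equiv.swap a b).trans ℓ)
      (fun ℓ _ => (Equiv.swap a b).trans ℓ) ?_ ?_ ?_ ?_
    · intro ℓ h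
      simp only [Finset.mem_filter, Finset.mem_univ, true_and] at h ⊢
      refine ⟨fun x hx => ?_, hP ℓ b hb h.1⟩
      simpa using h.2 _ (hswap b hb x hx)
    · intro ℓ h
      simp only [Finset.mem_filter, Finset.mem_univ, true_and] at h ⊢
      refine ⟨hP ℓ b hb h.2, fun x hx => ?_⟩
      simpa using h.1 _ (hswap b hb x hx)
    · intro ℓ _
      ext x
      simp
    · intro ℓ _
      ext x
      simp
  have hone : ∀ ℓ : α ≃ Fin m, (A.filter fun b => ∀ x ∈ A, ℓ b ≤ ℓ x).card = 1 := by
    intro ℓ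
    obtain ⟨b, hb, hmin⟩ := A.exists_min_image ℓ ⟨a, ha⟩
    rw [Finset.card_eq_one]
    refine ⟨b, Finset.ext fun c => ?_⟩
    simp only [Finset.mem_filter, Finset.mem_singleton]
    constructor
    · rintro ⟨hc, h⟩
      exact ℓ.injective (le_antisymm (h b hb) (hmin c hc))
    · rintro rfl
      exact ⟨hb, hmin⟩
  -- Double count the pairs of a labeling satisfying `P` and its minimizer on `A`.
  have hdc := Finset.sum_card_bipartiteAbove_eq_sum_card_bipartiteBelow
    (s := Finset.univ.filter fun ℓ : α ≃ Fin m => P ℓ) (t := A)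
    (fun ℓ b => ∀ x ∈ A, ℓ b ≤ ℓ x)
  simp only [Finset.bipartiteAbove, Finset.bipartiteBelow] at hdc
  rw [Finset.sum_congr rfl (fun ℓ _ => hone ℓ), Finset.sum_congr rfl heq] at hdc
  simpa using hdc.symm

/-- The closed neighbourhood of `e` in the line graph of `G`. -/
noncomputable def closedEdgeNbhd {V : Type*} [Fintype V] (G : SimpleGraph V) [Fintype G.edgeSet]
    (e : G.edgeFinset) : Finset G.edgeFinset :=
  Finset.univ.filter fun x => x = e ∨ ∃ v, v ∈ (e : Sym2 V) ∧ v ∈ (x : Sym2 V)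

lemma locallyMinimalEdge_iff {V : Type*} [Fintype V] (G : SimpleGraph V) [Fintype G.edgeSet]
    {m : ℕ} (ℓ : G.edgeFinset ≃ Fin m) (e : G.edgeFinset) :
    LocallyMinimalEdge G ℓ e ↔ ∀ x ∈ closedEdgeNbhd G e, ℓ e ≤ ℓ x := by
  simp only [closedEdgeNbhd, Finset.mem_filter, Finset.mem_univ, true_and]
  constructor
  · intro h x hx
    by_cases hxe : x = e
    · rw [hxe]
    · exact (h x hxe (hx.resolve_left hxe)).le
  · intro h x hxe hx
    exact lt_of_le_of_ne (h x (Or.inr hx)) fun h' => hxe (ℓ.injective h').symm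

theorem locally_minimal_independence {V : Type*} [Fintype V]
    (G : SimpleGraph V) [DecidableRel G.Adj] [Fintype G.edgeSet]
    (m : ℕ) (hm : G.edgeFinset.card = m)
    (e f : G.edgeFinset) (hef : e ≠ f)
    (hshare : ¬∃ v, v ∈ (e : Sym2 V) ∧ v ∈ (f : Sym2 V))
    (hcommon : ∀ g : G.edgeFinset,
      ¬((∃ v, v ∈ (g : Sym2 V) ∧ v ∈ (e : Sym2 V)) ∧
        (∃ v, v ∈ (g : Sym2 V) ∧ v ∈ (f : Sym2 V)))) :
    ((Finset.univ.filter fun ℓ : G.edgeFinset ≃ Fin m =>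
          LocallyMinimalEdge G ℓ e ∧ LocallyMinimalEdge G ℓ f).card : ℝ) /
        (Nat.factorial m) =
      (((Finset.univ.filter fun ℓ : G.edgeFinset ≃ Fin m =>
            LocallyMinimalEdge G ℓ e).card : ℝ) / (Nat.factorial m)) *
        (((Finset.univ.filter fun ℓ : G.edgeFinset ≃ Fin m =>
            LocallyMinimalEdge G ℓ f).card : ℝ) / (Nat.factorial m)) := by
  have heA : e ∈ closedEdgeNbhd G e := by simp [closedEdgeNbhd]
  have hfB : f ∈ closedEdgeNbhd G f := by simp [closedEdgeNbhd]
  have hdisj : ∀ x ∈ closedEdgeNbhd G e, x ∉ closedEdgeNbhd G f := by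
    simp only [closedEdgeNbhd, Finset.mem_filter, Finset.mem_univ, true_and]
    rintro x (rfl | ⟨v, hv, hvx⟩) (rfl | ⟨w, hw, hwx⟩)
    · exact hef rfl
    · exact hshare ⟨w, hwx, hw⟩
    · exact hshare ⟨v, hv, hvx⟩
    · exact hcommon x ⟨⟨v, hvx, hv⟩, ⟨w, hwx, hw⟩⟩
  have h1 := card_mul_card_min_eq (m := m) (closedEdgeNbhd G e) e heA (fun _ => True)
    (fun _ _ _ _ => trivial)
  have h2 := card_mul_card_min_eq (m := m) (closedEdgeNbhd G e) e heA
    (fun ℓ => LocallyMinimalEdge G ℓ f) (by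
      intro ℓ x hx h
      rw [locallyMinimalEdge_iff] at h ⊢
      -- A transposition inside the neighbourhood of `e` fixes that of `f` pointwise.
      have hfix : ∀ y ∈ closedEdgeNbhd G f, Equiv.swap e x y = y := fun y hy =>
        Equiv.swap_apply_of_ne_of_ne (fun h' => hdisj e heA (h' ▸ hy))
          (fun h' => hdisj x hx (h' ▸ hy))
      intro y hy
      simpa [hfix y hy, hfix f hfB] using h y hy)
  have hcard : Fintype.card (G.edgeFinset ≃ Fin m) = m.factorial := by
    have hm' : Fintype.card G.edgeFinset = m := by rw [Fintype.card_coe, hm]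
    rw [Fintype.card_equiv (Fintype.equivFinOfCardEq hm'), hm']
  simp only [← locallyMinimalEdge_iff, and_true, Finset.filter_true, Finset.card_univ] at h1 h2
  rw [hcard] at h1
  have hA : ((closedEdgeNbhd G e).card : ℝ) ≠ 0 := by
    exact_mod_cast (Finset.card_pos.mpr ⟨e, heA⟩).ne'
  have hN : (m.factorial : ℝ) ≠ 0 := by exact_mod_cast m.factorial_ne_zero
  have h1' := congrArg (Nat.cast : ℕ → ℝ) h1
  have h2' := congrArg (Nat.cast : ℕ → ℝ) h2
  push_cast at h1' h2'
  rw [div_mul_div_comm, div_eq_div_iff hN (mul_ne_zero hN hN)]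
  apply mul_left_cancel₀ hA
  linear_combination (m.factorial : ℝ) * (m.factorial : ℝ) * h2' -
    (m.factorial : ℝ) * ((Finset.univ.filter fun ℓ : G.edgeFinset ≃ Fin m =>
      LocallyMinimalEdge G ℓ f).card : ℝ) * h1'
end

section
/- Fix n ∈ ℕ, let ε = 2^{−4n} and P_k = (k+1) + ε(k+1)² for 0 ≤ k ≤ 2^n − 1. For 0 ≤ l ≤ n and 0 ≤ i ≤ 2^{n−l} − 1, let N^l_i = {P_k : i·2^l ≤ k ≤ (i+1)·2^l − 1}, and define the average-linkage distance d(X,Y) = (1/(|X||Y|)) ∑_{x∈X, y∈Y} |x − y|. Then for fixed l with 0 ≤ l ≤ n − 1, the quantity d(N^l_i, N^l_{i+1}) is strictly increasing in i for 0 ≤ i ≤ 2^{n−l} − 2. -/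
/-!
Write `m = 2 ^ l`. Adjacent nodes are `{P_{im+a}}` and `{P_{(i+1)m+b}}` with `a, b < m`, and since
`k ↦ P_k` is strictly increasing, both have `m` elements and
`|P_{im+a} - P_{(i+1)m+b}| = (m + b - a) + ε (m + b - a) ((2i+1)m + a + b + 2)`.
As `ε > 0` and `m + b - a > 0`, each of these `m²` terms is strictly increasing in `i`, hence so is
their average. The exact value of `ε` plays no role.
-/

/-- `ε = 2^(-4n)`. -/
noncomputable def eps (n : ℕ) : ℝ := ((2 : ℝ) ^ (4 * n))⁻¹

/-- The point `P_k = (k+1) + ε (k+1)^2`. -/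
noncomputable def pt (n k : ℕ) : ℝ := ((k : ℝ) + 1) + eps n * ((k : ℝ) + 1) ^ 2

/-- The node `N^l_i = {P_k : i·2^l ≤ k ≤ (i+1)·2^l − 1}` of the complete binary tree. -/
noncomputable def node (n l i : ℕ) : Finset ℝ :=
  (Finset.Icc (i * 2 ^ l) ((i + 1) * 2 ^ l - 1)).image (pt n)

/-- The average-linkage distance between finite sets of reals. -/
noncomputable def avgDist (X Y : Finset ℝ) : ℝ :=
  (∑ x ∈ X, ∑ y ∈ Y, |x - y|) / ((X.card : ℝ) * (Y.card : ℝ))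

theorem eps_pos (n : ℕ) : 0 < eps n := by
  unfold eps; positivity

theorem pt_strictMono (n : ℕ) : StrictMono (pt n) := by
  intro a b hab
  have h : (a : ℝ) < b := by exact_mod_cast hab
  have ha : (0 : ℝ) ≤ a := a.cast_nonneg
  have he := eps_pos n
  unfold pt
  gcongr

theorem node_eq (n l i : ℕ) :
    node n l i = (Finset.range (2 ^ l)).image (fun a => pt n (i * 2 ^ l + a)) := by
  have hm : 0 < 2 ^ l := by positivity
  have hI : Finset.Icc (i * 2 ^ l) ((i + 1) * 2 ^ l - 1)
      = (Finset.range (2 ^ l)).image (fun a => i * 2 ^ l + a) := by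
    ext k
    simp only [Finset.mem_Icc, Finset.mem_image, Finset.mem_range, add_mul, one_mul]
    constructor
    · rintro ⟨h1, h2⟩
      exact ⟨k - i * 2 ^ l, by omega, by omega⟩
    · rintro ⟨a, ha, rfl⟩
      omega
  rw [node, hI, Finset.image_image]
  rfl

theorem pt_block_injective (n l i : ℕ) :
    Function.Injective (fun a => pt n (i * 2 ^ l + a)) := by
  intro a b h
  have := (pt_strictMono n).injective h
  omega

theorem avgDist_node_eq (n l i : ℕ) :
    avgDist (node n l i) (node n l (i + 1)) =
      (∑ a ∈ Finset.range (2 ^ l), ∑ b ∈ Finset.range (2 ^ l),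
        (pt n ((i + 1) * 2 ^ l + b) - pt n (i * 2 ^ l + a))) /
        (((2 ^ l : ℕ) : ℝ) * ((2 ^ l : ℕ) : ℝ)) := by
  rw [avgDist, node_eq, node_eq,
    Finset.card_image_of_injective _ (pt_block_injective n l i),
    Finset.card_image_of_injective _ (pt_block_injective n l (i + 1)), Finset.card_range,
    Finset.sum_image (pt_block_injective n l i).injOn]
  congr 1
  refine Finset.sum_congr rfl fun a ha => ?_
  rw [Finset.sum_image (pt_block_injective n l (i + 1)).injOn]
  refine Finset.sum_congr rfl fun b _ => ?_
  have hlt : pt n (i * 2 ^ l + a) < pt n ((i + 1) * 2 ^ l + b) := by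
    apply pt_strictMono
    rw [add_mul, one_mul]
    have := Finset.mem_range.1 ha
    omega
  rw [abs_sub_comm, abs_of_pos (sub_pos.2 hlt)]

theorem pt_gap_lt (n m i j a b : ℕ) (ha : a < m) (hij : i < j) :
    pt n ((i + 1) * m + b) - pt n (i * m + a) < pt n ((j + 1) * m + b) - pt n (j * m + a) := by
  have ha' : (a : ℝ) < m := by exact_mod_cast ha
  have hij' : (i : ℝ) < j := by exact_mod_cast hij
  have hb : (0 : ℝ) ≤ b := b.cast_nonneg
  have hm : (0 : ℝ) < m := by exact_mod_cast (Nat.zero_le a).trans_lt ha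
  have key : 0 < eps n * (2 * m * (j - i) * (m + b - a) : ℝ) :=
    mul_pos (eps_pos n) (mul_pos (mul_pos (by positivity) (sub_pos.2 hij')) (by linarith))
  unfold pt
  push_cast
  linear_combination key

theorem avgDist_adjacent_strict_mono (n l : ℕ) (hl : l + 1 ≤ n) :
    ∀ i j : ℕ, i < j → j + 2 ≤ 2 ^ (n - l) →
      avgDist (node n l i) (node n l (i + 1)) < avgDist (node n l j) (node n l (j + 1)) := by
  intro i j hij _
  have hne : (Finset.range (2 ^ l)).Nonempty := by simp
  rw [avgDist_node_eq, avgDist_node_eq]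
  refine div_lt_div_of_pos_right ?_ (by positivity)
  exact Finset.sum_lt_sum_of_nonempty hne fun a ha =>
    Finset.sum_lt_sum_of_nonempty hne fun b _ =>
      pt_gap_lt n (2 ^ l) i j a b (Finset.mem_range.1 ha) hij
end
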